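/- Let R be a basic left Harada algebra with idempotent data {e_{ij}} and modules P_{ij} := rad^{j-1}(e_{i1}R) as below. Then the set { P_{ik}/P_{il} : 1 ≤ i ≤ m, 1 ≤ k < l ≤ n_i } is a complete set of representatives of the isomorphism classes of indecomposable finitely generated right R-modules whose projective dimension is exactly one; that is, each P_{ik}/P_{il} is indecomposable of projective dimension one, they are pairwise non-isomorphic, and every indecomposable finitely generated right R-module of projective dimension one is isomorphic to some P_{ik}/P_{il}. -/

import Mathlib

/-!
Common setup.  `K` is an algebraically closed field and `R` a finite-dimensional associative
unital `K`-algebra.  Right `R`-modules are formalized as modules over the opposite ring `Rᵐᵒᵖ`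
(so that `MulOpposite.op r • x = x * r`).
-/

open MulOpposite

/-- The right ideal `xR` of a ring `R`, as a submodule of `R` over `Rᵐᵒᵖ`. -/
def rightIdeal (R : Type) [Ring R] (x : R) : Submodule Rᵐᵒᵖ R :=
  Submodule.span Rᵐᵒᵖ {x}

/-- The Jacobson radical of a submodule `N` (the intersection of the maximal submodules of the
module `N`), viewed as a submodule of the ambient module.  Iterating this operation gives the
iterated radicals `rad^k`. -/
def radSub {A M : Type} [Ring A] [AddCommGroup M] [Module A M] (N : Submodule A M) :
    Submodule A M :=
  Submodule.map N.subtype (sInf {P : Submodule A ↥N | IsCoatom P})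

/-- A module is indecomposable if it is nonzero and admits no nontrivial direct sum
decomposition. -/
def IsIndecomposableMod (A M : Type) [Ring A] [AddCommGroup M] [Module A M] : Prop :=
  Nontrivial M ∧ ∀ N N' : Submodule A M, IsCompl N N' → N = ⊥ ∨ N' = ⊥

/-- A module has projective dimension at most one iff it admits a surjection from a projective
module with projective kernel. -/
def PdLeOne (A : Type) [Ring A] (M : Type) [AddCommGroup M] [Module A M] : Prop :=
  ∃ (P : ModuleCat.{0} A) (f : ↥P →ₗ[A] M),
    Module.Projective A ↥P ∧ Function.Surjective f ∧
      Module.Projective A ↥(LinearMap.ker f)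

/-- `Ext¹_A(M,N) = 0`, expressed by the splitting of every short exact sequence
`0 → N → E → M → 0`. -/
def Ext1Zero (A : Type) [Ring A] (M N : Type) [AddCommGroup M] [Module A M]
    [AddCommGroup N] [Module A N] : Prop :=
  ∀ (E : ModuleCat.{0} A) (i : N →ₗ[A] ↥E) (p : ↥E →ₗ[A] M),
    Function.Injective i → Function.Surjective p → LinearMap.range i = LinearMap.ker p →
    ∃ s : M →ₗ[A] ↥E, p.comp s = LinearMap.id

/-- `X ∈ add T` : `X` is a direct summand of a finite direct sum of copies of `T`. -/
def InAdd (A : Type) [Ring A] (T X : Type) [AddCommGroup T] [Module A T]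
    [AddCommGroup X] [Module A X] : Prop :=
  ∃ (k : ℕ) (f : X →ₗ[A] (Fin k → T)) (g : (Fin k → T) →ₗ[A] X),
    g.comp f = LinearMap.id

/-- `T` is a (finitely generated) tilting right `R`-module: projective dimension at most one,
no self-extensions, and there is a short exact sequence `0 → R → T₀ → T₁ → 0` with
`T₀, T₁ ∈ add T`. -/
def IsTiltingRight (R : Type) [Ring R] (T : Type) [AddCommGroup T] [Module Rᵐᵒᵖ T] : Prop :=
  Module.Finite Rᵐᵒᵖ T ∧ PdLeOne Rᵐᵒᵖ T ∧ Ext1Zero Rᵐᵒᵖ T T ∧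
    ∃ (T₀ T₁ : ModuleCat.{0} Rᵐᵒᵖ) (f : R →ₗ[Rᵐᵒᵖ] ↥T₀) (g : ↥T₀ →ₗ[Rᵐᵒᵖ] ↥T₁),
      InAdd Rᵐᵒᵖ T ↥T₀ ∧ InAdd Rᵐᵒᵖ T ↥T₁ ∧
        Function.Injective f ∧ Function.Surjective g ∧ LinearMap.range f = LinearMap.ker g

/-- `T` is basic: it is an (internal) direct sum of pairwise non-isomorphic indecomposable
submodules. -/
def IsBasicMod (A : Type) [Ring A] (T : Type) [AddCommGroup T] [Module A T] : Prop :=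
  ∃ (k : ℕ) (N : Fin k → Submodule A T),
    DirectSum.IsInternal N ∧ (∀ a, IsIndecomposableMod A ↥(N a)) ∧
      ∀ a b, a ≠ b → IsEmpty (↥(N a) ≃ₗ[A] ↥(N b))

/-- The setoid identifying isomorphic modules (among those with property `P`). -/
def isoSetoid (A : Type) [Ring A] (P : ModuleCat.{0} A → Prop) :
    Setoid {M : ModuleCat.{0} A // P M} where
  r M N := Nonempty (↥M.1 ≃ₗ[A] ↥N.1)
  iseqv := ⟨fun M => ⟨LinearEquiv.refl A ↥M.1⟩, fun ⟨e⟩ => ⟨e.symm⟩,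
    fun ⟨e⟩ ⟨f⟩ => ⟨e.trans f⟩⟩

/-- The data exhibiting a ring `R` as a basic left Harada algebra:
a complete set `{e i j}` of orthogonal primitive idempotents with pairwise non-isomorphic
right ideals `(e i j)R` (`R` is basic), such that each `(e i 0)R` is an injective right
module, and `(e i j)R ≅ rad ((e i (j-1))R)` for `j ≥ 1`.  (Indices are shifted by one from
the paper: the paper's `e_{ij}` is `e i (j-1)` here.) -/
structure HaradaData (R : Type) [Ring R] : Type where
  m : ℕ
  hm : 0 < m
  n : Fin m → ℕ
  hn : ∀ i, 0 < n i
  e : (i : Fin m) → Fin (n i) → R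
  idem : ∀ i j, IsIdempotentElem (e i j)
  orth : ∀ p q : Σ i : Fin m, Fin (n i), p ≠ q → e p.1 p.2 * e q.1 q.2 = 0
  sum_eq_one : ∑ p : Σ i : Fin m, Fin (n i), e p.1 p.2 = 1
  indec : ∀ i j, IsIndecomposableMod Rᵐᵒᵖ ↥(rightIdeal R (e i j))
  basic : ∀ p q : Σ i : Fin m, Fin (n i), p ≠ q →
    IsEmpty (↥(rightIdeal R (e p.1 p.2)) ≃ₗ[Rᵐᵒᵖ] ↥(rightIdeal R (e q.1 q.2)))
  inj : ∀ i, Module.Injective Rᵐᵒᵖ ↥(rightIdeal R (e i ⟨0, hn i⟩))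
  rad_iso : ∀ (i : Fin m) (j : Fin (n i)), 0 < j.val →
    Nonempty (↥(rightIdeal R (e i j)) ≃ₗ[Rᵐᵒᵖ]
      ↥(radSub (rightIdeal R (e i ⟨j.val - 1, Nat.lt_of_le_of_lt (Nat.sub_le j.val 1) j.isLt⟩))))

variable {R : Type} [Ring R]

/-- `H.P i j = rad^j ((e i 0)R)`; this is the paper's `P_{i,j+1} = rad^j (e_{i1}R)`,
a submodule of `R`. -/
def HaradaData.P (H : HaradaData R) (i : Fin H.m) (j : Fin (H.n i)) : Submodule Rᵐᵒᵖ R :=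
  radSub^[j.val] (rightIdeal R (H.e i ⟨0, H.hn i⟩))

/-- The quotient module `P_{ik}/P_{il}` (for `l ≥ k` we have `H.P i l ≤ H.P i k`). -/
abbrev HaradaData.Quot (H : HaradaData R) (i : Fin H.m) (k l : Fin (H.n i)) : Type :=
  ↥(H.P i k) ⧸ Submodule.comap (H.P i k).subtype (H.P i l)

/-- The last index (the paper's `n_i`) in `Fin (H.n i)`. -/
def HaradaData.last (H : HaradaData R) (i : Fin H.m) : Fin (H.n i) :=
  ⟨H.n i - 1, Nat.sub_lt (H.hn i) one_pos⟩

/-- The right ideal `I = ⊕_{i,j} rad^{n_i - j + 1}(e_{ij}R)` of the paper. -/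
def HaradaData.I (H : HaradaData R) : Submodule Rᵐᵒᵖ R :=
  ⨆ p : Σ i : Fin H.m, Fin (H.n i),
    radSub^[H.n p.1 - p.2.val] (rightIdeal R (H.e p.1 p.2))

/-- The submodule `T·I` of a right module `T`, for `I` a right ideal of `R`. -/
def smulSub (I : Submodule Rᵐᵒᵖ R) (T : Type) [AddCommGroup T] [Module Rᵐᵒᵖ T] :
    Submodule Rᵐᵒᵖ T :=
  Submodule.span Rᵐᵒᵖ {x : T | ∃ (t : T) (r : R), r ∈ I ∧ x = op r • t}

/-!
Each `P_{ij}` is local (`⊤` is `SupIrred`), being indecomposable projective, and uniform (`⊥` is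
`InfIrred`), being a submodule of the indecomposable injective `P_{i1}`. Extending a map from
`P_{ij}` to `P_{ab}` to a map from `P_{i1}` to `P_{a1}`, one sees that either its image lies below
the whole chain `P_{a1} ⊇ P_{a2} ⊇ ⋯`, or `i = a` and the extension is an automorphism of `P_{i1}`
preserving every member of the chain.

Let `X` be indecomposable of projective dimension one and `∏ s, P_{i s, k s} → X` a minimal
presentation; its kernel `Q` is projective and nonzero. Some coordinate image of `Q` is a
`P_{i s, l}`; choose one with `l - k s` least. The resulting map `P_{i s, l} → Q` has all its
coordinates extendable to `P_{i s, k s}`, because a coordinate that is not extendable would give a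
smaller difference. Hence `P_{i s, k s} / P_{i s, l}` is a direct summand of `X`, so it is `X`.
-/

section Submodules

variable {A L M N : Type*} [Ring A] [AddCommGroup L] [Module A L] [AddCommGroup M] [Module A M]
  [AddCommGroup N] [Module A N]

theorem supIrred_top_of_surjective (hM : SupIrred (⊤ : Submodule A M)) [Nontrivial N]
    {f : M →ₗ[A] N} (hf : Function.Surjective f) : SupIrred (⊤ : Submodule A N) := by
  refine ⟨by simp [isMin_iff_eq_bot], fun X Y hXY => ?_⟩
  have hcomap : X.comap f ⊔ Y.comap f = ⊤ := by
    rw [← Submodule.comap_map_eq_self (LinearMap.ker_le_comap f |>.trans le_sup_left),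
      Submodule.map_sup_comap_of_surjective hf, hXY, Submodule.comap_top]
  exact (hM.2 hcomap).imp (fun h => Submodule.comap_injective_of_surjective hf h)
    (fun h => Submodule.comap_injective_of_surjective hf h)

theorem infIrred_bot_of_injective (hM : InfIrred (⊥ : Submodule A M)) [Nontrivial L]
    {f : L →ₗ[A] M} (hf : Function.Injective f) : InfIrred (⊥ : Submodule A L) := by
  refine ⟨by simp [isMax_iff_eq_top], fun X Y hXY => ?_⟩
  have hmap : X.map f ⊓ Y.map f = ⊥ := by
    rw [← Submodule.map_inf f hf, hXY, Submodule.map_bot]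
  exact (hM.2 hmap).imp
    (fun h => Submodule.map_injective_of_injective hf (h.trans (Submodule.map_bot f).symm))
    (fun h => Submodule.map_injective_of_injective hf (h.trans (Submodule.map_bot f).symm))

theorem surjective_of_surjective_comp (hM : SupIrred (⊤ : Submodule A M)) {f : L →ₗ[A] M}
    {g : M →ₗ[A] N} (hg : g ≠ 0) (hgf : Function.Surjective (g ∘ₗ f)) :
    Function.Surjective f := by
  have hsup : LinearMap.range f ⊔ LinearMap.ker g = ⊤ := by
    rw [← Submodule.comap_map_eq, ← LinearMap.range_comp, LinearMap.range_eq_top.mpr hgf,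
      Submodule.comap_top]
  exact LinearMap.range_eq_top.mp
    ((hM.2 hsup).resolve_right fun h => hg (LinearMap.ker_eq_top.mp h))

theorem injective_of_injective_comp (hM : InfIrred (⊥ : Submodule A M)) {f : L →ₗ[A] M}
    {g : M →ₗ[A] N} (hf : f ≠ 0) (hgf : Function.Injective (g ∘ₗ f)) :
    Function.Injective g := by
  have hinf : LinearMap.range f ⊓ LinearMap.ker g = ⊥ := by
    rw [← Submodule.map_comap_eq, ← LinearMap.ker_comp, LinearMap.ker_eq_bot.mpr hgf,
      Submodule.map_bot]
  exact LinearMap.ker_eq_bot.mp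
    ((hM.2 hinf).resolve_left fun h => hf (LinearMap.range_eq_bot.mp h))

theorem exists_surjective_of_iSup_range_eq_top {ι : Type*} {P : ι → Type*}
    [∀ s, AddCommGroup (P s)] [∀ s, Module A (P s)] [Module.Projective A M]
    [Module.Finite A M] [Nontrivial M] (hP : ∀ s, SupIrred (⊤ : Submodule A (P s)))
    (c : ∀ s, P s →ₗ[A] M) (hc : ⨆ s, LinearMap.range (c s) = ⊤) :
    ∃ s, ∃ a : M →ₗ[A] P s, Function.Surjective a := by
  obtain ⟨C, hC⟩ := IsCoatomic.exists_coatom (Submodule A M)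
  obtain ⟨s, hs⟩ : ∃ s, ¬ LinearMap.range (c s) ≤ C := by
    by_contra! hle
    exact hC.1 (top_le_iff.mp (hc ▸ iSup_le hle))
  have hsurj : Function.Surjective (C.mkQ ∘ₗ c s) := by
    rw [← LinearMap.range_eq_top, LinearMap.range_comp, Submodule.map_mkQ_eq_top]
    exact (hC.not_le_iff_codisjoint.mp hs).eq_top
  obtain ⟨a, ha⟩ := Module.projective_lifting_property _ C.mkQ hsurj
  refine ⟨s, a, surjective_of_surjective_comp (hP s) (g := C.mkQ ∘ₗ c s) ?_ ?_⟩
  · rwa [Ne, ← LinearMap.range_le_ker_iff, C.ker_mkQ]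
  · rw [ha]
    exact C.mkQ_surjective

-- Schanuel's lemma, in the form that `ker f` is a retract of `ker g × L`.
theorem projective_ker_of_projective_ker [Module.Projective A L] [Module.Projective A M]
    {f : L →ₗ[A] N} (hf : Function.Surjective f) {g : M →ₗ[A] N} (hg : Function.Surjective g)
    [Module.Projective A (LinearMap.ker g)] : Module.Projective A (LinearMap.ker f) := by
  obtain ⟨l, hl⟩ := Module.projective_lifting_property g f hg
  obtain ⟨m, hm⟩ := Module.projective_lifting_property f g hf
  have hl' (x) : g (l x) = f x := LinearMap.congr_fun hl x
  have hm' (x) : f (m x) = g x := LinearMap.congr_fun hm x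
  let i : LinearMap.ker f →ₗ[A] LinearMap.ker g × L :=
    (l.restrict fun x hx => by simpa [hl'] using hx).prod (LinearMap.ker f).subtype
  let r : LinearMap.ker g × L →ₗ[A] LinearMap.ker f :=
    (m.restrict fun x hx => by simpa [hm'] using hx).coprod
      ((LinearMap.id - m ∘ₗ l).codRestrict _ fun x => by simp [hm', hl'])
  refine Module.Projective.of_split i r ?_
  ext x
  simp [i, r]

theorem projective_pi {ι : Type*} [Finite ι] (P : ι → Type*) [∀ s, AddCommGroup (P s)]
    [∀ s, Module A (P s)] [∀ s, Module.Projective A (P s)] : Module.Projective A (∀ s, P s) := by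
  classical
  have := Fintype.ofFinite ι
  exact .of_equiv (DirectSum.linearEquivFunOnFintype A ι P)

theorem exists_injective_proj_comp {ι : Type*} [Finite ι] {P : ι → Type*}
    [∀ s, AddCommGroup (P s)] [∀ s, Module A (P s)] (hM : InfIrred (⊥ : Submodule A M))
    {u : M →ₗ[A] ∀ s, P s} (hu : Function.Injective u) :
    ∃ s, Function.Injective (LinearMap.proj s ∘ₗ u) := by
  have := Fintype.ofFinite ι
  have hinf : Finset.univ.inf (fun s => LinearMap.ker (LinearMap.proj s ∘ₗ u)) = ⊥ := by
    rw [Finset.inf_univ_eq_iInf, ← LinearMap.ker_eq_bot.mpr hu, ← LinearMap.ker_pi]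
    rfl
  obtain ⟨s, -, hs⟩ := hM.finset_inf_eq hinf
  exact ⟨s, LinearMap.ker_eq_bot.mp hs⟩

theorem exists_finset_minimal_presentation {ι : Type*} {P : ι → Type*}
    [∀ s, AddCommGroup (P s)] [∀ s, Module A (P s)] [Module.Finite A M]
    (c : ∀ s, P s →ₗ[A] M) (hc : ⨆ s, LinearMap.range (c s) = ⊤) :
    ∃ (S : Finset ι) (f : (∀ s : S, P s) →ₗ[A] M), Function.Surjective f ∧
      ∀ s, (LinearMap.ker f).map (LinearMap.proj s) ≠ ⊤ := by
  classical
  obtain ⟨S₀, hS₀⟩ := CompleteLattice.IsCompactElement.exists_finset_of_le_iSup _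
    ((Submodule.fg_iff_compact _).mp Module.Finite.fg_top) _ hc.ge
  obtain ⟨S, -, hS, hmin⟩ := exists_minimal_le_of_wellFoundedLT
    (fun S : Finset ι => ⊤ ≤ ⨆ s ∈ S, LinearMap.range (c s)) S₀ hS₀
  let f : (∀ s : S, P s) →ₗ[A] M := LinearMap.lsum A _ ℕ fun s => c s
  have hf (y) : f y = ∑ s : S, c s (y s) := by simp [f]
  have hsurj : Function.Surjective f := by
    rw [← LinearMap.range_eq_top, eq_top_iff]
    refine hS.trans (iSup₂_le fun s hs => ?_)
    rintro _ ⟨x, rfl⟩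
    exact ⟨Pi.single (⟨s, hs⟩ : S) x, LinearMap.lsum_piSingle A _ ℕ _ _ _⟩
  refine ⟨S, f, hsurj, fun s hs => ?_⟩
  have hle : ⊤ ≤ ⨆ t ∈ S.erase s.1, LinearMap.range (c t) := by
    rintro x -
    obtain ⟨y, rfl⟩ := hsurj x
    obtain ⟨q, hq, hqy : q s = y s⟩ := hs.ge (Submodule.mem_top (x := y s))
    rw [← sub_zero (f y), ← LinearMap.mem_ker.mp hq, ← map_sub, hf]
    refine Submodule.sum_mem _ fun t _ => ?_
    rcases eq_or_ne t s with rfl | hts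
    · simp [hqy]
    · exact Submodule.mem_iSup_of_mem t.1 (Submodule.mem_iSup_of_mem
        (Finset.mem_erase.mpr ⟨Subtype.coe_injective.ne hts, t.2⟩) ⟨_, rfl⟩)
  exact Finset.notMem_erase s.1 S (hmin hle (S.erase_subset s.1) s.2)

end Submodules

section Indecomposable

variable {A M N : Type} [Ring A] [AddCommGroup M] [Module A M] [AddCommGroup N] [Module A N]

theorem isIndecomposableMod_of_supIrred_top (hM : SupIrred (⊤ : Submodule A M)) :
    IsIndecomposableMod A M := by
  refine ⟨?_, fun X Y hXY => ?_⟩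
  · rw [← Submodule.nontrivial_iff A]
    exact ⟨⊤, ⊥, hM.ne_bot⟩
  · rcases hM.2 hXY.sup_eq_top with rfl | rfl
    · exact Or.inr (eq_bot_of_top_isCompl hXY)
    · exact Or.inl (eq_bot_of_isCompl_top hXY)

namespace IsIndecomposableMod

theorem of_equiv (hM : IsIndecomposableMod A M) (e : M ≃ₗ[A] N) : IsIndecomposableMod A N := by
  have := hM.1
  refine ⟨e.symm.toEquiv.nontrivial, fun X Y hXY => ?_⟩
  simpa using hM.2 _ _ ((Submodule.orderIsoMapComap e.symm).isCompl hXY)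

theorem isNilpotent_or_isUnit [IsArtinian A M] [IsNoetherian A M]
    (hM : IsIndecomposableMod A M) (φ : Module.End A M) : IsNilpotent φ ∨ IsUnit φ := by
  obtain ⟨n, hn⟩ := Filter.eventually_atTop.mp φ.eventually_isCompl_ker_pow_range_pow
  have hcompl := hn (n + 1) n.le_succ
  rcases hM.2 _ _ hcompl with hker | hrange
  · right
    have hrange : LinearMap.range (φ ^ (n + 1)) = ⊤ := eq_top_of_bot_isCompl (hker ▸ hcompl)
    rw [← isUnit_pow_succ_iff (n := n), Module.End.isUnit_iff]
    exact ⟨LinearMap.ker_eq_bot.mp hker, LinearMap.range_eq_top.mp hrange⟩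
  · exact Or.inl ⟨n + 1, LinearMap.range_eq_bot.mp hrange⟩

theorem bijective_or_bijective_one_sub [IsArtinian A M] [IsNoetherian A M]
    (hM : IsIndecomposableMod A M) (φ : Module.End A M) :
    Function.Bijective φ ∨ Function.Bijective (1 - φ : Module.End A M) := by
  simp only [← Module.End.isUnit_iff]
  exact (hM.isNilpotent_or_isUnit φ).symm.imp_right IsNilpotent.isUnit_one_sub

theorem bijective_of_comp_eq_id (hM : IsIndecomposableMod A M) [Nontrivial N] {a : N →ₗ[A] M}
    {b : M →ₗ[A] N} (hba : b ∘ₗ a = LinearMap.id) :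
    Function.Bijective a ∧ Function.Bijective b := by
  have hleft : Function.LeftInverse b a := LinearMap.congr_fun hba
  have hcompl : IsCompl (LinearMap.range a) (LinearMap.ker b) := by
    rw [← LinearMap.ker_comp_of_ker_eq_bot b
      (LinearMap.ker_eq_bot.mpr (a.injective_rangeRestrict_iff.mpr hleft.injective))]
    refine LinearMap.isCompl_of_proj ?_
    rintro ⟨_, x, rfl⟩
    exact Subtype.ext (congrArg a (hleft x))
  have ha : LinearMap.range a ≠ ⊥ := by
    rw [Ne, LinearMap.range_eq_bot]
    rintro rfl
    obtain ⟨x, hx⟩ := exists_ne (0 : N)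
    exact hx (by simpa using (hleft x).symm)
  have hb : Function.Injective b := LinearMap.ker_eq_bot.mp ((hM.2 _ _ hcompl).resolve_left ha)
  exact ⟨⟨hleft.injective, (hleft.rightInverse_of_injective hb).surjective⟩, hb, hleft.surjective⟩

theorem bijective_of_surjective (hM : IsIndecomposableMod A M) [Nontrivial N]
    [Module.Projective A N] {b : M →ₗ[A] N} (hb : Function.Surjective b) :
    Function.Bijective b := by
  obtain ⟨a, ha⟩ := Module.projective_lifting_property b LinearMap.id hb
  exact (hM.bijective_of_comp_eq_id ha).2

theorem bijective_of_injective (hM : IsIndecomposableMod A M) [Nontrivial N]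
    [Module.Injective A N] {a : N →ₗ[A] M} (ha : Function.Injective a) :
    Function.Bijective a := by
  obtain ⟨b, hb⟩ := Module.Injective.out a ha LinearMap.id
  exact (hM.bijective_of_comp_eq_id (LinearMap.ext hb)).1

theorem supIrred_top [IsArtinian A M] [IsNoetherian A M] [Module.Projective A M]
    (hM : IsIndecomposableMod A M) : SupIrred (⊤ : Submodule A M) := by
  have := hM.1
  refine ⟨by simp [isMin_iff_eq_bot], fun X Y hXY => ?_⟩
  have hsurj : Function.Surjective (X.subtype.coprod Y.subtype) := by
    rw [← LinearMap.range_eq_top, LinearMap.range_coprod, X.range_subtype, Y.range_subtype, hXY]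
  obtain ⟨r, hr⟩ := Module.projective_lifting_property _ (LinearMap.id : M →ₗ[A] M) hsurj
  have hadd (x : M) : ((r x).1 : M) + (r x).2 = x := LinearMap.congr_fun hr x
  rcases hM.bijective_or_bijective_one_sub (X.subtype ∘ₗ LinearMap.fst A X Y ∘ₗ r) with h | h
  · left
    rw [eq_top_iff]
    rintro x -
    obtain ⟨y, rfl⟩ := h.2 x
    exact (r y).1.2
  · right
    rw [eq_top_iff]
    rintro x -
    obtain ⟨y, rfl⟩ := h.2 x
    have : (1 - X.subtype ∘ₗ LinearMap.fst A X Y ∘ₗ r) y = (r y).2 :=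
      sub_eq_of_eq_add' (hadd y).symm
    rw [this]
    exact (r y).2.2

theorem infIrred_bot [IsArtinian A M] [IsNoetherian A M] [Module.Injective A M]
    (hM : IsIndecomposableMod A M) : InfIrred (⊥ : Submodule A M) := by
  have := hM.1
  refine ⟨by simp [isMax_iff_eq_top], fun X Y hXY => ?_⟩
  have hinj : Function.Injective (X.subtype.coprod Y.subtype) := by
    rw [← LinearMap.ker_eq_bot, LinearMap.ker_coprod_of_disjoint_range, X.ker_subtype,
      Y.ker_subtype, Submodule.prod_bot]
    rwa [X.range_subtype, Y.range_subtype, disjoint_iff]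
  obtain ⟨φ, hφ⟩ := Module.Injective.out _ hinj (X.subtype ∘ₗ LinearMap.fst A X Y)
  have hX (x : M) (hx : x ∈ X) : φ x = x := by simpa using hφ (⟨x, hx⟩, 0)
  have hY (y : M) (hy : y ∈ Y) : φ y = 0 := by simpa using hφ (0, ⟨y, hy⟩)
  rcases hM.bijective_or_bijective_one_sub φ with h | h
  · exact Or.inr (Y.eq_bot_iff.mpr fun y hy => h.1 (by rw [hY y hy, map_zero]))
  · refine Or.inl (X.eq_bot_iff.mpr fun x hx => h.1 ?_)
    simp [hX x hx]

end IsIndecomposableMod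

end Indecomposable

section Quotients

variable {A F M N : Type} [Ring A] [AddCommGroup F] [Module A F] [AddCommGroup M] [Module A M]
  [AddCommGroup N] [Module A N]

theorem pdLeOne_quotient [Module.Projective A M] (S : Submodule A M) [Module.Projective A S] :
    PdLeOne A (M ⧸ S) :=
  ⟨ModuleCat.of A M, S.mkQ, ‹_›, S.mkQ_surjective, by rwa [S.ker_mkQ]⟩

theorem PdLeOne.projective_ker (hN : PdLeOne A N) [Module.Projective A M] {f : M →ₗ[A] N}
    (hf : Function.Surjective f) : Module.Projective A (LinearMap.ker f) := by
  obtain ⟨P, g, _, hg, _⟩ := hN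
  exact projective_ker_of_projective_ker hf hg

theorem IsIndecomposableMod.not_projective_quotient (hM : IsIndecomposableMod A M)
    {S : Submodule A M} (hbot : S ≠ ⊥) (htop : S ≠ ⊤) : ¬ Module.Projective A (M ⧸ S) := by
  intro _
  have : Nontrivial (M ⧸ S) := Submodule.Quotient.nontrivial_iff.mpr htop
  have hinj := (hM.bijective_of_surjective S.mkQ_surjective).1
  exact hbot (by rw [← S.ker_mkQ, LinearMap.ker_eq_bot.mpr hinj])

theorem exists_equiv_map_eq_of_quotient_equiv [Module.Projective A M] [Module.Projective A N]
    (hM : IsIndecomposableMod A M) (hN : SupIrred (⊤ : Submodule A N)) {S : Submodule A M}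
    {T : Submodule A N} (hT : T ≠ ⊤) (e : (M ⧸ S) ≃ₗ[A] (N ⧸ T)) :
    ∃ E : M ≃ₗ[A] N, S.map E.toLinearMap = T := by
  have := (isIndecomposableMod_of_supIrred_top hN).1
  obtain ⟨g, hg⟩ :=
    Module.projective_lifting_property T.mkQ (e.toLinearMap ∘ₗ S.mkQ) T.mkQ_surjective
  have hsurj : Function.Surjective g := by
    refine surjective_of_surjective_comp hN (g := T.mkQ) ?_ ?_
    · rwa [Ne, ← LinearMap.ker_eq_top, T.ker_mkQ]
    · rw [hg]
      exact e.surjective.comp S.mkQ_surjective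
  have hS : T.comap g = S := by
    rw [← T.ker_mkQ, ← LinearMap.ker_comp, hg, LinearEquiv.ker_comp, S.ker_mkQ]
  refine ⟨LinearEquiv.ofBijective g (hM.bijective_of_surjective hsurj), ?_⟩
  rw [← hS]
  exact Submodule.map_comap_eq_of_surjective hsurj T

theorem nonempty_quotient_equiv_of_retract {Q : Submodule A F} {W : Submodule A N}
    (hQ : IsIndecomposableMod A (F ⧸ Q)) (hW : W ≠ ⊤) {π : F →ₗ[A] N} {g : N →ₗ[A] F}
    (hπ : Q ≤ W.comap π) (hg : W ≤ Q.comap g) (hπg : π ∘ₗ g = LinearMap.id) :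
    Nonempty ((F ⧸ Q) ≃ₗ[A] (N ⧸ W)) := by
  have : Nontrivial (N ⧸ W) := Submodule.Quotient.nontrivial_iff.mpr hW
  have hid : Q.mapQ W π hπ ∘ₗ W.mapQ Q g hg = LinearMap.id := by
    rw [← Submodule.mapQ_comp]
    ext x
    simp [hπg]
  exact ⟨.ofBijective _ (hQ.bijective_of_comp_eq_id hid).2⟩

end Quotients

section Radical

variable {A M N : Type} [Ring A] [AddCommGroup M] [Module A M] [AddCommGroup N] [Module A N]

theorem radSub_le (X : Submodule A M) : radSub X ≤ X :=
  Submodule.map_subtype_le X _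

theorem radSub_range {f : M →ₗ[A] N} (hf : Function.Injective f) :
    radSub (LinearMap.range f) = (Module.jacobson A M).map f := by
  have hjac : Module.jacobson A (LinearMap.range f) =
      (Module.jacobson A M).map (LinearEquiv.ofInjective f hf).toLinearMap :=
    (Module.map_jacobson_of_bijective (LinearEquiv.ofInjective f hf).bijective).symm
  change (Module.jacobson A (LinearMap.range f)).map _ = _
  rw [hjac, ← Submodule.map_comp]
  rfl

theorem nonempty_radSub_equiv {X : Submodule A M} {Y : Submodule A N} (e : X ≃ₗ[A] Y) :
    Nonempty (radSub X ≃ₗ[A] radSub Y) := by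
  have hf : Function.Injective (Y.subtype ∘ₗ e.toLinearMap) :=
    Y.subtype_injective.comp e.injective
  have hrange : LinearMap.range (Y.subtype ∘ₗ e.toLinearMap) = Y := by
    rw [LinearEquiv.range_comp, Y.range_subtype]
  have hY := radSub_range hf
  rw [hrange] at hY
  exact ⟨((Module.jacobson A X).equivMapOfInjective _ X.subtype_injective).symm ≪≫ₗ
    (Module.jacobson A X).equivMapOfInjective _ hf ≪≫ₗ LinearEquiv.ofEq _ _ hY.symm⟩

theorem map_radSub {X : Submodule A M} {φ : M →ₗ[A] N} (hφ : Set.InjOn φ X) :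
    (radSub X).map φ = radSub (X.map φ) := by
  rw [← LinearMap.range_domRestrict X φ, radSub_range (Set.injOn_iff_injective.mp hφ)]
  exact (Submodule.map_comp X.subtype φ _).symm

theorem map_iterate_radSub {X : Submodule A M} {φ : M →ₗ[A] N} (hφ : Set.InjOn φ X) (j : ℕ) :
    (radSub^[j] X).map φ = radSub^[j] (X.map φ) := by
  induction j generalizing X with
  | zero => rfl
  | succ j ih =>
    rw [Function.iterate_succ_apply, ih (hφ.mono (radSub_le X)), map_radSub hφ,
      Function.iterate_succ_apply]

theorem radSub_lt (X : Submodule A M) [Module.Finite A X] [Nontrivial X] : radSub X < X := by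
  conv_rhs => rw [← X.map_subtype_top]
  exact Submodule.map_strictMono_of_injective X.subtype_injective (Module.jacobson_lt_top A X)

theorem le_radSub_of_lt {X Y : Submodule A M} (hX : SupIrred (⊤ : Submodule A X)) (hYX : Y < X) :
    Y ≤ radSub X := by
  have hY : Y.comap X.subtype ≠ ⊤ := fun h =>
    hYX.not_ge (Submodule.comap_subtype_eq_top.mp h)
  have hle : Y.comap X.subtype ≤ Module.jacobson A X := by
    refine le_sInf fun C hC => ?_
    by_contra hYC
    exact (hX.2 (hC.not_le_iff_codisjoint.mp hYC).eq_top).elim hC.1 hY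
  calc Y = (Y.comap X.subtype).map X.subtype := by
        rw [Submodule.map_comap_subtype, inf_eq_right.mpr hYX.le]
    _ ≤ radSub X := Submodule.map_mono hle

end Radical

section RightIdeal

instance module_finite_mulOpposite : Module.Finite Rᵐᵒᵖ R :=
  .equiv (opLinearEquiv Rᵐᵒᵖ).symm

instance module_projective_mulOpposite : Module.Projective Rᵐᵒᵖ R :=
  .of_equiv (opLinearEquiv Rᵐᵒᵖ).symm

theorem rightIdeal_eq_range (x : R) :
    rightIdeal R x = LinearMap.range (LinearMap.mulLeft Rᵐᵒᵖ x) := by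
  ext y
  simp [rightIdeal, Submodule.mem_span_singleton, MulOpposite.exists]

theorem projective_rightIdeal {x : R} (hx : IsIdempotentElem x) :
    Module.Projective Rᵐᵒᵖ (rightIdeal R x) := by
  rw [rightIdeal_eq_range]
  refine .of_split (LinearMap.range (LinearMap.mulLeft Rᵐᵒᵖ x)).subtype
    (LinearMap.mulLeft Rᵐᵒᵖ x).rangeRestrict ?_
  ext ⟨_, y, rfl⟩
  simp [← mul_assoc, hx.eq]

end RightIdeal

namespace HaradaData

variable (H : HaradaData R)

/-- The first index (the paper's `1`) in `Fin (H.n i)`. -/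
def first (i : Fin H.m) : Fin (H.n i) := ⟨0, H.hn i⟩

theorem P_succ (i : Fin H.m) (j : ℕ) (hj : j + 1 < H.n i) :
    H.P i ⟨j + 1, hj⟩ = radSub (H.P i ⟨j, j.lt_succ_self.trans hj⟩) :=
  Function.iterate_succ_apply' _ _ _

theorem nonempty_rightIdeal_equiv_P (i : Fin H.m) (j : Fin (H.n i)) :
    Nonempty (rightIdeal R (H.e i j) ≃ₗ[Rᵐᵒᵖ] H.P i j) := by
  obtain ⟨j, hj⟩ := j
  induction j with
  | zero => exact ⟨.refl _ _⟩
  | succ j ih =>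
    obtain ⟨e⟩ := ih (j.lt_succ_self.trans hj)
    obtain ⟨radE⟩ := nonempty_radSub_equiv e
    obtain ⟨toRad⟩ := H.rad_iso i ⟨j + 1, hj⟩ j.succ_pos
    rw [P_succ]
    exact ⟨toRad ≪≫ₗ radE⟩

theorem isIndecomposableMod_P (i : Fin H.m) (j : Fin (H.n i)) :
    IsIndecomposableMod Rᵐᵒᵖ (H.P i j) :=
  (H.indec i j).of_equiv (H.nonempty_rightIdeal_equiv_P i j).some

instance nontrivial_P (i : Fin H.m) (j : Fin (H.n i)) : Nontrivial (H.P i j) :=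
  (H.isIndecomposableMod_P i j).1

instance projective_P (i : Fin H.m) (j : Fin (H.n i)) : Module.Projective Rᵐᵒᵖ (H.P i j) :=
  have := projective_rightIdeal (H.idem i j)
  .of_equiv (H.nonempty_rightIdeal_equiv_P i j).some

instance injective_P_first (i : Fin H.m) : Module.Injective Rᵐᵒᵖ (H.P i (H.first i)) :=
  H.inj i

variable {H} in
theorem sigma_eq_of_P_equiv {i i' : Fin H.m} {j : Fin (H.n i)} {j' : Fin (H.n i')}
    (E : H.P i j ≃ₗ[Rᵐᵒᵖ] H.P i' j') :
    (⟨i, j⟩ : Σ i : Fin H.m, Fin (H.n i)) = ⟨i', j'⟩ := by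
  by_contra hne
  obtain ⟨e⟩ := H.nonempty_rightIdeal_equiv_P i j
  obtain ⟨e'⟩ := H.nonempty_rightIdeal_equiv_P i' j'
  exact (H.basic _ _ hne).false (e ≪≫ₗ E ≪≫ₗ e'.symm)

theorem iSup_range_eq_top (M : Type) [AddCommGroup M] [Module Rᵐᵒᵖ M] :
    ⨆ s : Σ p : (Σ i : Fin H.m, Fin (H.n i)), (H.P p.1 p.2 →ₗ[Rᵐᵒᵖ] M),
      LinearMap.range s.2 = ⊤ := by
  refine eq_top_iff.mpr fun y _ => ?_
  let orbit : R →ₗ[Rᵐᵒᵖ] M :=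
    LinearMap.toSpanSingleton Rᵐᵒᵖ M y ∘ₗ (opLinearEquiv Rᵐᵒᵖ).toLinearMap
  have hy : y = ∑ p : Σ i : Fin H.m, Fin (H.n i), orbit (H.e p.1 p.2) := by
    rw [← map_sum, H.sum_eq_one]
    simp [orbit]
  rw [hy]
  refine Submodule.sum_mem _ fun p _ => ?_
  obtain ⟨E⟩ := H.nonempty_rightIdeal_equiv_P p.1 p.2
  refine Submodule.mem_iSup_of_mem
    ⟨p, orbit ∘ₗ (rightIdeal R (H.e p.1 p.2)).subtype ∘ₗ E.symm.toLinearMap⟩ ?_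
  exact ⟨E ⟨H.e p.1 p.2, Submodule.mem_span_singleton_self _⟩, by simp⟩

theorem P_antitone (i : Fin H.m) : Antitone (H.P i) :=
  fun _ _ hjk => Function.antitone_iterate_of_le_id radSub_le hjk _

theorem P_le_P_first (i : Fin H.m) (j : Fin (H.n i)) : H.P i j ≤ H.P i (H.first i) :=
  H.P_antitone i (Nat.zero_le j)

theorem exists_domRestrict_eq {i i' : Fin H.m} {j : Fin (H.n i)} {k : Fin (H.n i')}
    (u : H.P i j →ₗ[Rᵐᵒᵖ] H.P i' k) :
    ∃ φ : R →ₗ[Rᵐᵒᵖ] R, φ.domRestrict (H.P i j) = (H.P i' k).subtype ∘ₗ u ∧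
      (H.P i (H.first i)).map φ ≤ H.P i' (H.first i') := by
  obtain ⟨h, hh⟩ := Module.Injective.out (H.P i j).subtype (H.P i j).subtype_injective
    (Submodule.inclusion (H.P_le_P_first i' k) ∘ₗ u)
  refine ⟨(H.P i' (H.first i')).subtype ∘ₗ h,
    LinearMap.ext fun x => congrArg Subtype.val (hh x), ?_⟩
  rintro _ ⟨x, -, rfl⟩
  exact (h x).2

theorem pdLeOne_Quot {i : Fin H.m} {k l : Fin (H.n i)} (hkl : k ≤ l) :
    PdLeOne Rᵐᵒᵖ (H.Quot i k l) :=
  have : Module.Projective Rᵐᵒᵖ ((H.P i l).comap (H.P i k).subtype) :=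
    .of_equiv (Submodule.comapSubtypeEquivOfLe (H.P_antitone i hkl)).symm
  pdLeOne_quotient _

section Chain

variable [IsArtinianRing Rᵐᵒᵖ]

theorem supIrred_top_P (i : Fin H.m) (j : Fin (H.n i)) :
    SupIrred (⊤ : Submodule Rᵐᵒᵖ (H.P i j)) :=
  (H.isIndecomposableMod_P i j).supIrred_top

theorem P_strictAnti (i : Fin H.m) : StrictAnti (H.P i) := by
  rintro ⟨k, hk⟩ ⟨l, hl⟩ (hkl : k < l)
  induction l, hkl using Nat.le_induction with
  | base =>
    rw [P_succ]
    exact radSub_lt _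
  | succ l _ ih =>
    rw [P_succ]
    exact (radSub_lt _).trans (ih _)

theorem infIrred_bot_P (i : Fin H.m) (j : Fin (H.n i)) :
    InfIrred (⊥ : Submodule Rᵐᵒᵖ (H.P i j)) :=
  infIrred_bot_of_injective (H.isIndecomposableMod_P i (H.first i)).infIrred_bot
    (Submodule.inclusion_injective (H.P_le_P_first i j))

theorem exists_eq_P_or_forall_lt_P {i : Fin H.m} {X : Submodule Rᵐᵒᵖ R}
    (hX : X ≤ H.P i (H.first i)) : (∃ j, X = H.P i j) ∨ ∀ j, X < H.P i j := by
  refine or_iff_not_imp_left.mpr fun hne => ?_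
  rintro ⟨j, hj⟩
  refine lt_of_le_of_ne ?_ fun h => hne ⟨_, h⟩
  induction j with
  | zero => exact hX
  | succ j ih =>
    rw [P_succ]
    exact le_radSub_of_lt (H.supIrred_top_P i _)
      (lt_of_le_of_ne (ih _) fun h => hne ⟨_, h⟩)

theorem map_lt_P_or_map_P_eq {i i' : Fin H.m} {φ : R →ₗ[Rᵐᵒᵖ] R}
    (hφ : (H.P i (H.first i)).map φ ≤ H.P i' (H.first i')) :
    (∀ l, (H.P i (H.first i)).map φ < H.P i' l) ∨
      i = i' ∧ ∀ l : Fin (H.n i), (H.P i l).map φ = H.P i l := by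
  refine (H.exists_eq_P_or_forall_lt_P hφ).symm.imp_right ?_
  rintro ⟨j, hj⟩
  have : Module.Projective Rᵐᵒᵖ ((H.P i (H.first i)).map φ) := hj ▸ inferInstance
  have : Nontrivial ((H.P i (H.first i)).map φ) := hj ▸ inferInstance
  have hbij : Function.Bijective (φ.submoduleMap (H.P i (H.first i))) :=
    (H.isIndecomposableMod_P i _).bijective_of_surjective (φ.submoduleMap_surjective _)
  obtain ⟨rfl, h⟩ := Sigma.mk.inj
    (sigma_eq_of_P_equiv (LinearEquiv.ofBijective _ hbij ≪≫ₗ LinearEquiv.ofEq _ _ hj))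
  obtain rfl := eq_of_heq h
  have hinj : Set.InjOn φ (H.P i (H.first i)) := fun x hx y hy hxy =>
    congrArg Subtype.val (@hbij.1 ⟨x, hx⟩ ⟨y, hy⟩ (Subtype.ext hxy))
  refine ⟨rfl, fun l => ?_⟩
  calc (H.P i l).map φ = radSub^[l.val] ((H.P i (H.first i)).map φ) :=
        map_iterate_radSub hinj l
    _ = H.P i l := by rw [hj]; rfl

theorem map_P_eq_of_injective {i i' : Fin H.m} {j : Fin (H.n i)} {φ : R →ₗ[Rᵐᵒᵖ] R}
    (hφ : (H.P i (H.first i)).map φ ≤ H.P i' (H.first i')) (hinj : Set.InjOn φ (H.P i j)) :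
    i = i' ∧ ∀ l : Fin (H.n i), (H.P i l).map φ = H.P i l := by
  refine (H.map_lt_P_or_map_P_eq hφ).resolve_left fun hlt => (hlt (H.first i')).not_ge ?_
  let ψ : H.P i (H.first i) →ₗ[Rᵐᵒᵖ] H.P i' (H.first i') :=
    φ.restrict (Submodule.map_le_iff_le_comap.mp hφ)
  have hψ : Function.Injective ψ := by
    refine injective_of_injective_comp (H.infIrred_bot_P i _)
      (f := Submodule.inclusion (H.P_le_P_first i j)) ?_ fun x y hxy => ?_
    · intro h
      obtain ⟨x, hx⟩ := exists_ne (0 : H.P i j)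
      exact hx (Submodule.inclusion_injective (H.P_le_P_first i j) (by simp [h]))
    · exact Subtype.ext (hinj x.2 y.2 (congrArg Subtype.val hxy))
  intro y hy
  obtain ⟨x, hx⟩ := ((H.isIndecomposableMod_P i' _).bijective_of_injective hψ).2 ⟨y, hy⟩
  exact ⟨x, x.2, congrArg Subtype.val hx⟩

theorem exists_range_eq_P {i i' : Fin H.m} {j : Fin (H.n i)} {k : Fin (H.n i')}
    {u : H.P i j →ₗ[Rᵐᵒᵖ] H.P i' k} (hu : Function.Injective u) :
    ∃ l, LinearMap.range ((H.P i' k).subtype ∘ₗ u) = H.P i' l := by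
  obtain ⟨φ, hφu, hφ⟩ := H.exists_domRestrict_eq u
  have hinj : Set.InjOn φ (H.P i j) := by
    rw [Set.injOn_iff_injective]
    change Function.Injective (φ.domRestrict (H.P i j))
    rw [hφu]
    exact (H.P i' k).subtype_injective.comp hu
  obtain ⟨rfl, hmap⟩ := H.map_P_eq_of_injective hφ hinj
  exact ⟨j, by rw [← hφu, LinearMap.range_domRestrict, hmap]⟩

theorem exists_extension_or_range_eq_P {i i' : Fin H.m} {k l : Fin (H.n i)} {k' : Fin (H.n i')}
    (hkl : H.P i l ≤ H.P i k) (u : H.P i l →ₗ[Rᵐᵒᵖ] H.P i' k') :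
    (∃ g : H.P i k →ₗ[Rᵐᵒᵖ] H.P i' k', g ∘ₗ Submodule.inclusion hkl = u) ∨
      ∃ l' : Fin (H.n i'), LinearMap.range ((H.P i' k').subtype ∘ₗ u) = H.P i' l' ∧
        l'.val = l.val ∧ k.val < k'.val := by
  obtain ⟨φ, hφu, hφ⟩ := H.exists_domRestrict_eq u
  by_cases hk : (H.P i k).map φ ≤ H.P i' k'
  · refine Or.inl ⟨φ.restrict (Submodule.map_le_iff_le_comap.mp hk), ?_⟩
    exact LinearMap.ext fun x => Subtype.ext (LinearMap.congr_fun hφu x)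
  · right
    obtain ⟨rfl, hmap⟩ := (H.map_lt_P_or_map_P_eq hφ).resolve_left fun hlt =>
      hk ((Submodule.map_mono (H.P_le_P_first i k)).trans (hlt k').le)
    refine ⟨l, by rw [← hφu, LinearMap.range_domRestrict, hmap], rfl, ?_⟩
    rw [hmap k] at hk
    exact not_le.mp fun hle => hk (H.P_antitone i hle)

theorem comap_P_ne_top {i : Fin H.m} {k l : Fin (H.n i)} (hkl : k < l) :
    (H.P i l).comap (H.P i k).subtype ≠ ⊤ := fun h =>
  (H.P_strictAnti i hkl).not_ge (Submodule.comap_subtype_eq_top.mp h)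

theorem isIndecomposableMod_Quot {i : Fin H.m} {k l : Fin (H.n i)} (hkl : k < l) :
    IsIndecomposableMod Rᵐᵒᵖ (H.Quot i k l) :=
  have : Nontrivial (H.Quot i k l) :=
    Submodule.Quotient.nontrivial_iff.mpr (H.comap_P_ne_top hkl)
  isIndecomposableMod_of_supIrred_top
    (supIrred_top_of_surjective (H.supIrred_top_P i k) (Submodule.mkQ_surjective _))

theorem not_projective_Quot {i : Fin H.m} {k l : Fin (H.n i)} (hkl : k < l) :
    ¬ Module.Projective Rᵐᵒᵖ (H.Quot i k l) := by
  refine (H.isIndecomposableMod_P i k).not_projective_quotient ?_ (H.comap_P_ne_top hkl)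
  rw [← Submodule.nontrivial_iff_ne_bot]
  exact (Submodule.comapSubtypeEquivOfLe (H.P_antitone i hkl.le)).toEquiv.nontrivial

variable {H} in
theorem eq_of_Quot_equiv {i i' : Fin H.m} {k l : Fin (H.n i)} {k' l' : Fin (H.n i')}
    (hkl : k < l) (hkl' : k' < l') (E : H.Quot i k l ≃ₗ[Rᵐᵒᵖ] H.Quot i' k' l') :
    i = i' ∧ k.val = k'.val ∧ l.val = l'.val := by
  obtain ⟨F, hF⟩ := exists_equiv_map_eq_of_quotient_equiv (H.isIndecomposableMod_P i k)
    (H.supIrred_top_P i' k') (H.comap_P_ne_top hkl') E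
  obtain ⟨rfl, hk⟩ := Sigma.mk.inj (sigma_eq_of_P_equiv F)
  obtain rfl := eq_of_heq hk
  have Fl : H.P i l ≃ₗ[Rᵐᵒᵖ] H.P i l' :=
    (Submodule.comapSubtypeEquivOfLe (H.P_antitone i hkl.le)).symm ≪≫ₗ
      F.submoduleMap _ ≪≫ₗ LinearEquiv.ofEq _ _ hF ≪≫ₗ
      Submodule.comapSubtypeEquivOfLe (H.P_antitone i hkl'.le)
  obtain ⟨-, hl⟩ := Sigma.mk.inj (sigma_eq_of_P_equiv Fl)
  exact ⟨rfl, rfl, congrArg Fin.val (eq_of_heq hl)⟩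

end Chain

section Pivot

variable {H} {ι : Type} {i : ι → Fin H.m} {k : ∀ s, Fin (H.n (i s))}

/-- The image in `R` of a submodule of `∏ s, P_{i s, k s}` under the projection to the factor
`s`, to be compared with the members of the chain `P_{i s, j}`. -/
def coordImage (Q : Submodule Rᵐᵒᵖ (∀ s, H.P (i s) (k s))) (s : ι) : Submodule Rᵐᵒᵖ R :=
  Q.map ((H.P (i s) (k s)).subtype ∘ₗ LinearMap.proj s)

/-- The coordinate `s` is a pivot of `Q ≤ ∏ s, P_{i s, k s}`, with image `P_{i s, l}`, if its
depth `l - k s` is least among all coordinates in which the image of `Q` is a member of the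
chain. Depths are integers, so that the minimality involves no truncated subtraction. -/
structure IsPivot (Q : Submodule Rᵐᵒᵖ (∀ s, H.P (i s) (k s))) (s : ι) (l : Fin (H.n (i s))) :
    Prop where
  coordImage_eq : coordImage Q s = H.P (i s) l
  depth_le : ∀ t (l' : Fin (H.n (i t))), coordImage Q t = H.P (i t) l' →
    (l : ℤ) - k s ≤ l' - k t

variable {Q : Submodule Rᵐᵒᵖ (∀ s, H.P (i s) (k s))} {s : ι} {l : Fin (H.n (i s))}

theorem coordImage_le : coordImage Q s ≤ H.P (i s) (k s) := by
  rintro _ ⟨y, -, rfl⟩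
  exact (y s).2

theorem range_proj_comp_le_coordImage {M : Type} [AddCommGroup M] [Module Rᵐᵒᵖ M]
    (v : M →ₗ[Rᵐᵒᵖ] Q) : LinearMap.range
      ((H.P (i s) (k s)).subtype ∘ₗ LinearMap.proj s ∘ₗ Q.subtype ∘ₗ v) ≤ coordImage Q s := by
  rintro _ ⟨x, rfl⟩
  exact ⟨v x, (v x).2, rfl⟩

namespace IsPivot

theorem P_le (hp : IsPivot Q s l) : H.P (i s) l ≤ H.P (i s) (k s) :=
  hp.coordImage_eq.ge.trans coordImage_le

theorem exists_lift (hp : IsPivot Q s l) :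
    ∃ v : H.P (i s) l →ₗ[Rᵐᵒᵖ] Q,
      LinearMap.proj s ∘ₗ Q.subtype ∘ₗ v = Submodule.inclusion hp.P_le := by
  obtain ⟨v, hv⟩ := Module.projective_lifting_property
    (LinearMap.submoduleMap ((H.P (i s) (k s)).subtype ∘ₗ LinearMap.proj s) Q)
    (Submodule.inclusion hp.coordImage_eq.ge) (LinearMap.submoduleMap_surjective _ _)
  refine ⟨v, LinearMap.ext fun x => Subtype.ext ?_⟩
  have hvx := congrArg Subtype.val (LinearMap.congr_fun hv x)
  exact hvx

end IsPivot

variable [IsArtinianRing Rᵐᵒᵖ]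

theorem exists_coordImage_eq_of_le (hl : H.P (i s) l ≤ coordImage Q s) :
    ∃ l' ≤ l, coordImage Q s = H.P (i s) l' := by
  obtain ⟨l', hl'⟩ := (H.exists_eq_P_or_forall_lt_P
    (coordImage_le.trans (H.P_le_P_first _ _))).resolve_right fun hlt => (hlt l).not_ge hl
  exact ⟨l', (H.P_strictAnti _).le_iff_ge.mp (hl'.subst hl), hl'⟩

theorem exists_coordImage_eq [Finite ι] [Module.Projective Rᵐᵒᵖ Q] [Nontrivial Q] :
    ∃ (s : ι) (l : Fin (H.n (i s))), coordImage Q s = H.P (i s) l := by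
  obtain ⟨⟨⟨i₀, j₀⟩, _⟩, a, ha⟩ := exists_surjective_of_iSup_range_eq_top
    (M := Q)
    (P := fun p : Σ p : (Σ i : Fin H.m, Fin (H.n i)), H.P p.1 p.2 →ₗ[Rᵐᵒᵖ] Q => H.P p.1.1 p.1.2)
    (fun p => H.supIrred_top_P p.1.1 p.1.2) (fun p => p.2) (H.iSup_range_eq_top Q)
  obtain ⟨v, hv⟩ := Module.projective_lifting_property a LinearMap.id ha
  have hinj : Function.Injective (Q.subtype ∘ₗ v) :=
    Q.subtype_injective.comp (Function.LeftInverse.injective (LinearMap.congr_fun hv))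
  obtain ⟨s, hs⟩ := exists_injective_proj_comp (H.infIrred_bot_P i₀ j₀) hinj
  obtain ⟨l, hl⟩ := H.exists_range_eq_P hs
  obtain ⟨l', -, hl'⟩ :=
    exists_coordImage_eq_of_le (hl.ge.trans (range_proj_comp_le_coordImage v))
  exact ⟨s, l', hl'⟩

theorem exists_isPivot [Finite ι] [Module.Projective Rᵐᵒᵖ Q] [Nontrivial Q] :
    ∃ (s : ι) (l : Fin (H.n (i s))), IsPivot Q s l := by
  obtain ⟨s₀, l₀, h₀⟩ := exists_coordImage_eq (Q := Q)
  obtain ⟨⟨s, l⟩, hsl, hmin⟩ := Set.exists_min_image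
    {p : Σ s, Fin (H.n (i s)) | coordImage Q p.1 = H.P (i p.1) p.2}
    (fun p => (p.2 : ℤ) - k p.1) (Set.toFinite _) ⟨⟨s₀, l₀⟩, h₀⟩
  exact ⟨s, l, hsl, fun t l' h => hmin ⟨t, l'⟩ h⟩

namespace IsPivot

theorem exists_extension (hp : IsPivot Q s l) (v : H.P (i s) l →ₗ[Rᵐᵒᵖ] Q) (t : ι) :
    ∃ g : H.P (i s) (k s) →ₗ[Rᵐᵒᵖ] H.P (i t) (k t),
      g ∘ₗ Submodule.inclusion hp.P_le = LinearMap.proj t ∘ₗ Q.subtype ∘ₗ v := by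
  refine (H.exists_extension_or_range_eq_P hp.P_le _).resolve_right ?_
  rintro ⟨l', hrange, hl', hk⟩
  obtain ⟨l'', hle, hl''⟩ :=
    exists_coordImage_eq_of_le (hrange.ge.trans (range_proj_comp_le_coordImage v))
  have hdepth := hp.depth_le t l'' hl''
  rw [Fin.le_def] at hle
  omega

theorem exists_section (hp : IsPivot Q s l) :
    ∃ G : H.P (i s) (k s) →ₗ[Rᵐᵒᵖ] ∀ t, H.P (i t) (k t),
      LinearMap.proj s ∘ₗ G = LinearMap.id ∧
        (H.P (i s) l).comap (H.P (i s) (k s)).subtype ≤ Q.comap G := by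
  classical
  obtain ⟨v, hv⟩ := hp.exists_lift
  choose g hg using hp.exists_extension v
  refine ⟨LinearMap.pi (Function.update g s LinearMap.id), ?_, fun x hx => ?_⟩
  · rw [LinearMap.proj_pi, Function.update_self]
  · suffices hx' : LinearMap.pi (Function.update g s LinearMap.id) x = v ⟨x, hx⟩ from
      Submodule.mem_comap.mpr (hx' ▸ (v ⟨x, hx⟩).2)
    funext t
    rcases eq_or_ne t s with rfl | hts
    · rw [LinearMap.pi_apply, Function.update_self]
      exact (LinearMap.congr_fun hv ⟨x, hx⟩).symm
    · rw [LinearMap.pi_apply, Function.update_of_ne hts]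
      exact LinearMap.congr_fun (hg t) ⟨x, hx⟩

theorem nonempty_equiv_Quot (hp : IsPivot Q s l)
    (hQ : IsIndecomposableMod Rᵐᵒᵖ ((∀ s, H.P (i s) (k s)) ⧸ Q)) (hkl : k s < l) :
    Nonempty (((∀ s, H.P (i s) (k s)) ⧸ Q) ≃ₗ[Rᵐᵒᵖ] H.Quot (i s) (k s) l) := by
  obtain ⟨G, hG, hle⟩ := hp.exists_section
  refine nonempty_quotient_equiv_of_retract hQ (H.comap_P_ne_top hkl) ?_ hle hG
  rw [← Submodule.map_le_iff_le_comap, ← Submodule.map_le_iff_le_comap, ← Submodule.map_comp]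
  exact hp.coordImage_eq.le

theorem lt (hp : IsPivot Q s l) (hQ : Q.map (LinearMap.proj s) ≠ ⊤) : k s < l := by
  refine lt_of_le_of_ne ((H.P_strictAnti _).le_iff_ge.mp hp.P_le) fun hkl => hQ ?_
  apply Submodule.map_injective_of_injective (H.P (i s) (k s)).subtype_injective
  rw [← Submodule.map_comp, Submodule.map_subtype_top]
  exact hp.coordImage_eq.trans (by rw [hkl])

end IsPivot

end Pivot

theorem exists_equiv_Quot [IsArtinianRing Rᵐᵒᵖ] {X : Type} [AddCommGroup X] [Module Rᵐᵒᵖ X]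
    [Module.Finite Rᵐᵒᵖ X]
    (hX : IsIndecomposableMod Rᵐᵒᵖ X) (hpd : PdLeOne Rᵐᵒᵖ X)
    (hproj : ¬ Module.Projective Rᵐᵒᵖ X) :
    ∃ (i : Fin H.m) (k l : Fin (H.n i)), k < l ∧ Nonempty (X ≃ₗ[Rᵐᵒᵖ] H.Quot i k l) := by
  obtain ⟨S, f, hf, hmin⟩ := exists_finset_minimal_presentation _ (H.iSup_range_eq_top X)
  have : Module.Projective Rᵐᵒᵖ (∀ s : S, H.P s.1.1.1 s.1.1.2) := projective_pi _
  have : Module.Projective Rᵐᵒᵖ (LinearMap.ker f) := hpd.projective_ker hf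
  have : Nontrivial (LinearMap.ker f) := by
    rw [Submodule.nontrivial_iff_ne_bot, Ne, LinearMap.ker_eq_bot]
    exact fun hinj => hproj (.of_equiv (LinearEquiv.ofBijective f ⟨hinj, hf⟩))
  obtain ⟨s, l, hp⟩ := exists_isPivot (Q := LinearMap.ker f)
  have hkl := hp.lt (hmin s)
  let e := f.quotKerEquivOfSurjective hf
  obtain ⟨E⟩ := hp.nonempty_equiv_Quot (hX.of_equiv e.symm) hkl
  exact ⟨_, _, l, hkl, ⟨e.symm ≪≫ₗ E⟩⟩

end HaradaData

theorem statement0_general [IsArtinianRing Rᵐᵒᵖ] (H : HaradaData R) :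
    (∀ (i : Fin H.m) (k l : Fin (H.n i)), k < l →
      IsIndecomposableMod Rᵐᵒᵖ (H.Quot i k l) ∧ PdLeOne Rᵐᵒᵖ (H.Quot i k l) ∧
        ¬ Module.Projective Rᵐᵒᵖ (H.Quot i k l)) ∧
    (∀ (i : Fin H.m) (k l : Fin (H.n i)) (i' : Fin H.m) (k' l' : Fin (H.n i')),
      k < l → k' < l' → ¬ (i = i' ∧ k.val = k'.val ∧ l.val = l'.val) →
      IsEmpty (H.Quot i k l ≃ₗ[Rᵐᵒᵖ] H.Quot i' k' l')) ∧
    (∀ X : ModuleCat.{0} Rᵐᵒᵖ, Module.Finite Rᵐᵒᵖ ↥X → IsIndecomposableMod Rᵐᵒᵖ ↥X →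
      PdLeOne Rᵐᵒᵖ ↥X → ¬ Module.Projective Rᵐᵒᵖ ↥X →
      ∃ (i : Fin H.m) (k l : Fin (H.n i)), k < l ∧
        Nonempty (↥X ≃ₗ[Rᵐᵒᵖ] H.Quot i k l)) :=
  ⟨fun _ _ _ hkl =>
      ⟨H.isIndecomposableMod_Quot hkl, H.pdLeOne_Quot hkl.le, H.not_projective_Quot hkl⟩,
    fun _ _ _ _ _ _ hkl hkl' hne =>
      ⟨fun E => hne (HaradaData.eq_of_Quot_equiv hkl hkl' E)⟩,
    fun _ _ hX hpd hproj => H.exists_equiv_Quot hX hpd hproj⟩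

/-- Theorem 1.3.  The modules `P_{ik}/P_{il}` (`1 ≤ i ≤ m`,
`1 ≤ k < l ≤ n_i`) form a complete set of representatives of the isomorphism classes of
indecomposable finitely generated right `R`-modules of projective dimension exactly one:
each of them is indecomposable of projective dimension one, they are pairwise non-isomorphic,
and every indecomposable finitely generated right `R`-module of projective dimension exactly
one is isomorphic to one of them. -/
theorem statement0 (K R : Type) [Field K] [IsAlgClosed K] [Ring R] [Algebra K R]
    [FiniteDimensional K R] (H : HaradaData R) :
    (∀ (i : Fin H.m) (k l : Fin (H.n i)), k < l →
      IsIndecomposableMod Rᵐᵒᵖ (H.Quot i k l) ∧ PdLeOne Rᵐᵒᵖ (H.Quot i k l) ∧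
        ¬ Module.Projective Rᵐᵒᵖ (H.Quot i k l)) ∧
    (∀ (i : Fin H.m) (k l : Fin (H.n i)) (i' : Fin H.m) (k' l' : Fin (H.n i')),
      k < l → k' < l' → ¬ (i = i' ∧ k.val = k'.val ∧ l.val = l'.val) →
      IsEmpty (H.Quot i k l ≃ₗ[Rᵐᵒᵖ] H.Quot i' k' l')) ∧
    (∀ X : ModuleCat.{0} Rᵐᵒᵖ, Module.Finite Rᵐᵒᵖ ↥X → IsIndecomposableMod Rᵐᵒᵖ ↥X →
      PdLeOne Rᵐᵒᵖ ↥X → ¬ Module.Projective Rᵐᵒᵖ ↥X →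
      ∃ (i : Fin H.m) (k l : Fin (H.n i)), k < l ∧
        Nonempty (↥X ≃ₗ[Rᵐᵒᵖ] H.Quot i k l)) := by
  have : IsArtinianRing Rᵐᵒᵖ := isArtinian_of_tower K inferInstance
  exact statement0_general H
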